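/- Let (Ω, F, P) be a probability space with a filtration (F_k)_{k∈ℕ}, let (v_k)_{k∈ℕ} be a sequence of nonnegative, integrable, adapted real-valued random variables, let (x_k)_{k∈ℕ} be a sequence of adapted random vectors with values in ℝ^m, and let v̄, ā : [0, ∞) → [0, ∞) be continuous, strictly increasing functions with v̄(0) = ā(0) = 0. Assume the discrete Lyapunov drift condition E[v_{k+1} | F_k] ≤ v_k − ā(‖x_k‖) almost surely for every k, and assume v̄(‖x_k‖) ≤ v_k almost surely for every k. Then for every ε > 0, lim_{N→∞} P( sup_{k ≥ N} ‖x_k‖ > ε ) = 0. -/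

import Mathlib

open MeasureTheory Filter

/-!
Taking expectations in the drift condition shows that `E v_k` decreases by at least `E a_k` at
each step, where `a_k = ā(‖x_k‖)`. By Markov's inequality `c · P(a_k ≥ c) ≤ E v_k - E v_{k+1}`,
and the right-hand sides telescope to at most `E v_0`, so `∑ P(a_k ≥ c)` is finite for every
`c > 0`. The union bound then controls `P(∃ k ≥ N, a_k ≥ c)` by the tail of a convergent series;
monotonicity of `ā` turns this into a statement about `‖x_k‖`.
-/

theorem tsum_ofReal_sub_succ_le {u : ℕ → ℝ} (hu : Antitone u) (hu_nonneg : ∀ k, 0 ≤ u k) :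
    ∑' k, ENNReal.ofReal (u k - u (k + 1)) ≤ ENNReal.ofReal (u 0) := by
  refine ENNReal.tsum_le_of_sum_range_le fun n => ?_
  have hstep (k : ℕ) : 0 ≤ u k - u (k + 1) := sub_nonneg.2 (hu k.le_succ)
  rw [← ENNReal.ofReal_sum_of_nonneg fun k _ => hstep k, Finset.sum_range_sub']
  exact ENNReal.ofReal_le_ofReal (sub_le_self _ (hu_nonneg n))

theorem tendsto_measure_exists_ge_mem_of_tsum_ne_top {Ω F : Type*} [FunLike F (Set Ω) ENNReal]
    [OuterMeasureClass F Ω] {μ : F} {s : ℕ → Set Ω} (hs : ∑' k, μ (s k) ≠ ⊤) :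
    Tendsto (fun N : ℕ => μ {ω | ∃ k ≥ N, ω ∈ s k}) atTop (nhds 0) := by
  have htail (N : ℕ) : μ {ω | ∃ k ≥ N, ω ∈ s k} ≤ ∑' k, μ (s (k + N)) := by
    refine (measure_mono ?_).trans (measure_iUnion_le fun k => s (k + N))
    rintro ω ⟨k, hk, hω⟩
    exact Set.mem_iUnion.2 ⟨k - N, by rwa [Nat.sub_add_cancel hk]⟩
  exact tendsto_of_tendsto_of_tendsto_of_le_of_le tendsto_const_nhds
    (ENNReal.tendsto_sum_nat_add (fun k => μ (s k)) hs) (fun _ => zero_le) htail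

section OneStep

variable {Ω : Type*} {m m0 : MeasurableSpace Ω} {μ : Measure Ω} {f g a : Ω → ℝ}

theorem integral_sub_condExp (hm : m ≤ m0) [SigmaFinite (μ.trim hm)] (hf : Integrable f μ) :
    ∫ ω, (f ω - (μ[g | m]) ω) ∂μ = ∫ ω, f ω ∂μ - ∫ ω, g ω ∂μ := by
  rw [integral_sub hf integrable_condExp, integral_condExp hm]

theorem integral_le_integral_of_condExp_le (hm : m ≤ m0) [SigmaFinite (μ.trim hm)]
    (hf : Integrable f μ) (h : μ[g | m] ≤ᵐ[μ] f) : ∫ ω, g ω ∂μ ≤ ∫ ω, f ω ∂μ := by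
  rw [← integral_condExp hm]
  exact integral_mono_ae integrable_condExp hf h

-- Markov's inequality needs measurability, so it is applied to the expected decrement
-- `f - μ[g | m]`, which dominates `a`.
theorem ofReal_mul_measure_ge_le_of_condExp_le_sub (hm : m ≤ m0) [SigmaFinite (μ.trim hm)]
    (hf : Integrable f μ) (ha : 0 ≤ᵐ[μ] a) (h : μ[g | m] ≤ᵐ[μ] f - a) (c : ℝ) :
    ENNReal.ofReal c * μ {ω | c ≤ a ω} ≤ ENNReal.ofReal (∫ ω, f ω ∂μ - ∫ ω, g ω ∂μ) := by
  have hd_int : Integrable (fun ω => f ω - (μ[g | m]) ω) μ := hf.sub integrable_condExp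
  have ha_le : ∀ᵐ ω ∂μ, a ω ≤ f ω - (μ[g | m]) ω := h.mono fun _ hω => le_sub_comm.1 hω
  have hd_nonneg : 0 ≤ᵐ[μ] fun ω => f ω - (μ[g | m]) ω := ha.trans ha_le
  calc ENNReal.ofReal c * μ {ω | c ≤ a ω}
      ≤ ENNReal.ofReal c *
          μ {ω | ENNReal.ofReal c ≤ ENNReal.ofReal (f ω - (μ[g | m]) ω)} := by
        refine mul_le_mul_right (measure_mono_ae ?_) _
        exact ha_le.mono fun ω hω (hc : c ≤ a ω) => ENNReal.ofReal_le_ofReal (hc.trans hω)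
    _ ≤ ∫⁻ ω, ENNReal.ofReal (f ω - (μ[g | m]) ω) ∂μ :=
        mul_meas_ge_le_lintegral₀ hd_int.aemeasurable.ennreal_ofReal _
    _ = ENNReal.ofReal (∫ ω, f ω ∂μ - ∫ ω, g ω ∂μ) := by
        rw [← ofReal_integral_eq_lintegral_ofReal hd_int hd_nonneg, integral_sub_condExp hm hf]

end OneStep

section Drift

variable {Ω : Type*} {m0 : MeasurableSpace Ω} {μ : Measure Ω} {ℱ : ℕ → MeasurableSpace Ω}
  {v a : ℕ → Ω → ℝ}

theorem ofReal_mul_tsum_measure_ge_le_of_drift (hℱ : ∀ k, ℱ k ≤ m0)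
    [∀ k, SigmaFinite (μ.trim (hℱ k))] (hv_nonneg : ∀ k, 0 ≤ᵐ[μ] v k)
    (hv_int : ∀ k, Integrable (v k) μ) (ha_nonneg : ∀ k, 0 ≤ᵐ[μ] a k)
    (hdrift : ∀ k, μ[v (k + 1) | ℱ k] ≤ᵐ[μ] v k - a k) (c : ℝ) :
    ENNReal.ofReal c * ∑' k, μ {ω | c ≤ a k ω} ≤ ENNReal.ofReal (∫ ω, v 0 ω ∂μ) := by
  have hanti : Antitone fun k => ∫ ω, v k ω ∂μ := antitone_nat_of_succ_le fun k =>
    integral_le_integral_of_condExp_le (hℱ k) (hv_int k) <| (hdrift k).trans <|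
      (ha_nonneg k).mono fun _ hω => sub_le_self _ hω
  rw [← ENNReal.tsum_mul_left]
  calc ∑' k, ENNReal.ofReal c * μ {ω | c ≤ a k ω}
      ≤ ∑' k, ENNReal.ofReal (∫ ω, v k ω ∂μ - ∫ ω, v (k + 1) ω ∂μ) :=
        ENNReal.tsum_le_tsum fun k => ofReal_mul_measure_ge_le_of_condExp_le_sub (hℱ k)
          (hv_int k) (ha_nonneg k) (hdrift k) c
    _ ≤ ENNReal.ofReal (∫ ω, v 0 ω ∂μ) :=
        tsum_ofReal_sub_succ_le hanti fun k => integral_nonneg_of_ae (hv_nonneg k)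

theorem tendsto_measure_exists_ge_of_drift (hℱ : ∀ k, ℱ k ≤ m0)
    [∀ k, SigmaFinite (μ.trim (hℱ k))] (hv_nonneg : ∀ k, 0 ≤ᵐ[μ] v k)
    (hv_int : ∀ k, Integrable (v k) μ) (ha_nonneg : ∀ k, 0 ≤ᵐ[μ] a k)
    (hdrift : ∀ k, μ[v (k + 1) | ℱ k] ≤ᵐ[μ] v k - a k) {c : ℝ} (hc : 0 < c) :
    Tendsto (fun N : ℕ => μ {ω | ∃ k ≥ N, c ≤ a k ω}) atTop (nhds 0) := by
  have hbound := ofReal_mul_tsum_measure_ge_le_of_drift hℱ hv_nonneg hv_int ha_nonneg hdrift c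
  have hsum : ∑' k, μ {ω | c ≤ a k ω} ≠ ⊤ :=
    (ENNReal.lt_top_of_mul_ne_top_right (ne_top_of_le_ne_top ENNReal.ofReal_ne_top hbound)
      (ENNReal.ofReal_pos.2 hc).ne').ne
  exact tendsto_measure_exists_ge_mem_of_tsum_ne_top hsum

theorem asymptotic_stochastic_stability_general {E : Type*} [SeminormedAddCommGroup E]
    (hℱ : ∀ k, ℱ k ≤ m0) [∀ k, SigmaFinite (μ.trim (hℱ k))]
    (hv_nonneg : ∀ k, 0 ≤ᵐ[μ] v k) (hv_int : ∀ k, Integrable (v k) μ)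
    {x : ℕ → Ω → E} {abar : ℝ → ℝ} (habar_mono : MonotoneOn abar (Set.Ici 0))
    (habar_zero_nonneg : 0 ≤ abar 0) (habar_pos : ∀ r, 0 < r → 0 < abar r)
    (hdrift : ∀ k, ∀ᵐ ω ∂μ, (μ[v (k + 1) | ℱ k]) ω ≤ v k ω - abar ‖x k ω‖)
    {ε : ℝ} (hε : 0 < ε) :
    Tendsto (fun N : ℕ => μ {ω | ∃ k ≥ N, ε < ‖x k ω‖}) atTop (nhds 0) := by
  have ha_nonneg (k : ℕ) (ω : Ω) : 0 ≤ abar ‖x k ω‖ := habar_zero_nonneg.trans <|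
    habar_mono Set.self_mem_Ici (norm_nonneg _) (norm_nonneg _)
  have hlim : Tendsto (fun N : ℕ => μ {ω | ∃ k ≥ N, abar ε ≤ abar ‖x k ω‖}) atTop (nhds 0) :=
    tendsto_measure_exists_ge_of_drift hℱ hv_nonneg hv_int
      (fun k => .of_forall (ha_nonneg k)) hdrift (habar_pos ε hε)
  refine tendsto_of_tendsto_of_tendsto_of_le_of_le tendsto_const_nhds hlim
    (fun _ => zero_le) fun N => measure_mono ?_
  rintro ω ⟨k, hk, hω⟩
  exact ⟨k, hk, habar_mono hε.le (norm_nonneg _) hω.le⟩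

end Drift

/-- Discrete-time core of Theorem 2 (asymptotic stochastic stability): the drift
condition `E[v_{k+1} | ℱ_k] ≤ v_k - ā(‖x_k‖)` together with the lower bound
`v̄(‖x_k‖) ≤ v_k`, for continuous strictly increasing `v̄, ā : [0,∞) → [0,∞)`
vanishing at `0`, yields `lim_{N→∞} P(sup_{k ≥ N} ‖x_k‖ > ε) = 0` for every `ε > 0`. -/
theorem asymptotic_stochastic_stability
    {Ω : Type*} {m0 : MeasurableSpace Ω} {μ : Measure Ω} [IsProbabilityMeasure μ]
    (ℱ : Filtration ℕ m0) {m : ℕ}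
    (v : ℕ → Ω → ℝ)
    (hv_nonneg : ∀ k, 0 ≤ᵐ[μ] v k) (hv_int : ∀ k, Integrable (v k) μ)
    (hv_adapted : Adapted ℱ v)
    (x : ℕ → Ω → EuclideanSpace ℝ (Fin m)) (hx_adapted : Adapted ℱ x)
    (vbar abar : ℝ → ℝ)
    (hvbar_cont : ContinuousOn vbar (Set.Ici 0))
    (hvbar_mono : StrictMonoOn vbar (Set.Ici 0))
    (hvbar_nonneg : ∀ r, 0 ≤ r → 0 ≤ vbar r)
    (hvbar_zero : vbar 0 = 0)
    (habar_cont : ContinuousOn abar (Set.Ici 0))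
    (habar_mono : StrictMonoOn abar (Set.Ici 0))
    (habar_nonneg : ∀ r, 0 ≤ r → 0 ≤ abar r)
    (habar_zero : abar 0 = 0)
    (hdrift : ∀ k, ∀ᵐ ω ∂μ, (μ[v (k + 1) | ℱ k]) ω ≤ v k ω - abar ‖x k ω‖)
    (hbound : ∀ k, ∀ᵐ ω ∂μ, vbar ‖x k ω‖ ≤ v k ω) :
    ∀ ε : ℝ, 0 < ε →
      Tendsto (fun N : ℕ => μ {ω | ∃ k ≥ N, ε < ‖x k ω‖}) atTop (nhds 0) := by
  intro ε hε
  exact asymptotic_stochastic_stability_general ℱ.le hv_nonneg hv_int habar_mono.monotoneOn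
    habar_zero.ge (fun r hr => habar_zero ▸ habar_mono Set.self_mem_Ici hr.le hr) hdrift hε
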